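/- arXiv:2011.12241 — 4 statements merged into one kernel-verified Lean document; each statement's English description precedes it below -/
import Mathlib

section
/- Let Q_h, Q_v be positive integers, Q = Q_h·Q_v, α > 0 a real constant, g, g' complex numbers, and (θ,φ), (θ',φ') two angle pairs with angle-difference parameters b, c. If sin(παb) ≠ 0 and sin(παc) ≠ 0, then (1/Q)·Σ_{q=1}^{Q} g·e_q(θ,φ)·conj(g'·e_q(θ',φ')) = g·conj(g')·exp(iπα((Q_h−1)b + (Q_v−1)c)) · (sin(παbQ_h)/(Q_h·sin(παb))) · (sin(παcQ_v)/(Q_v·sin(παc))). -/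
/-!
With `q - 1 = k + Q_h l`, the product of one steering coefficient and the conjugate of the other
is `exp (2πiαbk) * exp (2πiαcl)`, so the sum over the array factors into two geometric sums
(`steerCoef_mul_conj`, `sum_range_mod_div`). Each of them is a Dirichlet kernel,
`∑_{k<n} exp (2ixk) = exp (i(n-1)x) sin (nx) / sin x` (`sum_exp_mul_sin`), at `x = παb`
and at `x = παc`.
-/

open scoped BigOperators

/-- The URA steering coefficient of antenna `q ∈ {1,…,Q_h Q_v}` for antenna spacing `α = d/λ`
and zenith/azimuthal angles `θ, φ`. -/
noncomputable def steerCoef (Qh : ℕ) (α θ φ : ℝ) (q : ℕ) : ℂ :=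
  Complex.exp (2 * Real.pi * Complex.I * (α : ℂ) *
    ((((q - 1) % Qh : ℕ) : ℂ) * ((Real.sin φ * Real.sin θ : ℝ) : ℂ) +
      (((q - 1) / Qh : ℕ) : ℂ) * ((Real.cos θ : ℝ) : ℂ)))

/-- The Dirichlet-kernel identity, kept free of division so that it holds for every `x`. -/
lemma sum_exp_mul_sin (x : ℂ) (n : ℕ) :
    (∑ k ∈ Finset.range n, Complex.exp (2 * Complex.I * x * k)) * Complex.sin x
      = Complex.exp (Complex.I * ((n : ℂ) - 1) * x) * Complex.sin (x * n) := by
  induction n with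
  | zero => simp
  | succ n ih =>
    rw [Finset.sum_range_succ, add_mul, ih]
    -- Everything is a Laurent polynomial in `exp (I x)` and `exp (I n x)`.
    have h1 : Complex.exp (Complex.I * ((n : ℂ) - 1) * x)
        = Complex.exp (x * n * Complex.I) * (Complex.exp (x * Complex.I))⁻¹ := by
      rw [← Complex.exp_neg, ← Complex.exp_add]; ring_nf
    have h2 : Complex.exp (2 * Complex.I * x * n)
        = Complex.exp (x * n * Complex.I) * Complex.exp (x * n * Complex.I) := by
      rw [← Complex.exp_add]; ring_nf
    have h3 : Complex.exp (Complex.I * (((n + 1 : ℕ) : ℂ) - 1) * x)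
        = Complex.exp (x * n * Complex.I) := by
      push_cast; ring_nf
    have h4 : Complex.exp (x * ((n + 1 : ℕ) : ℂ) * Complex.I)
        = Complex.exp (x * n * Complex.I) * Complex.exp (x * Complex.I) := by
      rw [← Complex.exp_add]; push_cast; ring_nf
    rw [h1, h2, h3]
    simp only [Complex.sin, neg_mul, Complex.exp_neg]
    rw [h4]
    have hE := Complex.exp_ne_zero (x * Complex.I)
    have hF := Complex.exp_ne_zero (x * n * Complex.I)
    field_simp
    ring

/-- Row-by-row summation over an array of `n` rows of length `m`. -/
lemma sum_range_mod_div (m n : ℕ) (u v : ℕ → ℂ) :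
    ∑ q ∈ Finset.range (m * n), u (q % m) * v (q / m)
      = (∑ k ∈ Finset.range m, u k) * ∑ l ∈ Finset.range n, v l := by
  induction n with
  | zero => simp
  | succ n ih =>
    rw [Nat.mul_succ, Finset.sum_range_add, ih, Finset.sum_range_succ _ n, mul_add,
      Finset.sum_mul _ _ (v n)]
    congr 1
    refine Finset.sum_congr rfl fun k hk => ?_
    have hk' : k < m := Finset.mem_range.mp hk
    rw [Nat.mul_add_mod, Nat.mod_eq_of_lt hk', Nat.mul_add_div (by omega),
      Nat.div_eq_of_lt hk', add_zero]

/-- The phases of two steering coefficients combine into a product of a horizontal and a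
vertical phase. -/
lemma steerCoef_mul_conj (Qh : ℕ) (α θ φ θ' φ' : ℝ) (q : ℕ) :
    steerCoef Qh α θ φ (1 + q) * (starRingEnd ℂ) (steerCoef Qh α θ' φ' (1 + q))
      = Complex.exp (2 * Complex.I * ((Real.pi * α *
            (Real.sin φ * Real.sin θ - Real.sin φ' * Real.sin θ') : ℝ) : ℂ) * (q % Qh : ℕ)) *
        Complex.exp (2 * Complex.I * ((Real.pi * α *
            (Real.cos θ - Real.cos θ') : ℝ) : ℂ) * (q / Qh : ℕ)) := by
  unfold steerCoef
  rw [← Complex.exp_conj, ← Complex.exp_add, ← Complex.exp_add, Nat.add_sub_cancel_left]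
  congr 1
  simp only [map_mul, map_add, Complex.conj_ofReal, Complex.conj_I, map_natCast, map_ofNat]
  push_cast
  ring

/-- Closed form for the normalized spatial correlation of two channel paths over a
`Q_h × Q_v` uniform rectangular array (equation (32) of the paper). -/
theorem normalized_spatial_correlation_closed_form
    (Qh Qv : ℕ) (hQh : 0 < Qh) (hQv : 0 < Qv) (α : ℝ) (hα : 0 < α)
    (g g' : ℂ) (θ φ θ' φ' : ℝ) (b c : ℝ)
    (hb : b = Real.sin φ * Real.sin θ - Real.sin φ' * Real.sin θ')
    (hc : c = Real.cos θ - Real.cos θ')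
    (hsb : Real.sin (Real.pi * α * b) ≠ 0) (hsc : Real.sin (Real.pi * α * c) ≠ 0) :
    (1 / ((Qh * Qv : ℕ) : ℂ)) *
        ∑ q ∈ Finset.Icc 1 (Qh * Qv),
          g * steerCoef Qh α θ φ q * (starRingEnd ℂ) (g' * steerCoef Qh α θ' φ' q)
      = g * (starRingEnd ℂ) g' *
          Complex.exp (Complex.I * Real.pi * (α : ℂ) *
            (((Qh : ℂ) - 1) * (b : ℂ) + ((Qv : ℂ) - 1) * (c : ℂ))) *
          ((Real.sin (Real.pi * α * b * Qh) / (Qh * Real.sin (Real.pi * α * b)) : ℝ) : ℂ) *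
          ((Real.sin (Real.pi * α * c * Qv) / (Qv * Real.sin (Real.pi * α * c)) : ℝ) : ℂ) := by
  have hsum : ∑ q ∈ Finset.Icc 1 (Qh * Qv),
      g * steerCoef Qh α θ φ q * (starRingEnd ℂ) (g' * steerCoef Qh α θ' φ' q)
      = g * (starRingEnd ℂ) g' *
        ((∑ k ∈ Finset.range Qh,
            Complex.exp (2 * Complex.I * ((Real.pi * α * b : ℝ) : ℂ) * k)) *
          ∑ l ∈ Finset.range Qv,
            Complex.exp (2 * Complex.I * ((Real.pi * α * c : ℝ) : ℂ) * l)) := by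
    rw [← sum_range_mod_div Qh Qv
        (fun k => Complex.exp (2 * Complex.I * ((Real.pi * α * b : ℝ) : ℂ) * k))
        (fun l => Complex.exp (2 * Complex.I * ((Real.pi * α * c : ℝ) : ℂ) * l)),
      Finset.mul_sum, ← Finset.Ico_add_one_right_eq_Icc, Finset.sum_Ico_eq_sum_range,
      Nat.add_sub_cancel]
    refine Finset.sum_congr rfl fun q _ => ?_
    rw [hb, hc, ← steerCoef_mul_conj, map_mul]
    ring
  have hsb' : Complex.sin ((Real.pi * α * b : ℝ) : ℂ) ≠ 0 := by
    rw [← Complex.ofReal_sin]; exact_mod_cast hsb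
  have hsc' : Complex.sin ((Real.pi * α * c : ℝ) : ℂ) ≠ 0 := by
    rw [← Complex.ofReal_sin]; exact_mod_cast hsc
  have hQh' : (Qh : ℂ) ≠ 0 := by exact_mod_cast hQh.ne'
  have hQv' : (Qv : ℂ) ≠ 0 := by exact_mod_cast hQv.ne'
  have hexp : Complex.exp (Complex.I * Real.pi * (α : ℂ) *
      (((Qh : ℂ) - 1) * (b : ℂ) + ((Qv : ℂ) - 1) * (c : ℂ)))
      = Complex.exp (Complex.I * ((Qh : ℂ) - 1) * ((Real.pi * α * b : ℝ) : ℂ)) *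
        Complex.exp (Complex.I * ((Qv : ℂ) - 1) * ((Real.pi * α * c : ℝ) : ℂ)) := by
    rw [← Complex.exp_add]; push_cast; ring_nf
  rw [hsum, eq_div_of_mul_eq hsb' (sum_exp_mul_sin _ Qh),
    eq_div_of_mul_eq hsc' (sum_exp_mul_sin _ Qv), hexp]
  simp only [Complex.ofReal_div, Complex.ofReal_sin, Complex.ofReal_mul, Complex.ofReal_natCast,
    Nat.cast_mul] at hsb' hsc' ⊢
  field_simp
end

section
/- Let N be a positive integer and D_N(x) := Σ_{n=0}^{N−1} exp(2πi·n·x) for real x. For every real θ and all integers k₁, k₂ with k₁ ≢ k₂ (mod N), Σ_{k'=0}^{N−1} D_N(θ − (k₁−k')/N) · conj(D_N(θ − (k₂−k')/N)) = 0. -/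
/-!
Expanding both Dirichlet sums and summing over `k'` first, the dependence on `k'` of the `(n, m)`
term is the character `k' ↦ exp (2πi (n - m) k' / N)` of `ℤ/N`, whose sum over a period is `N` if
`n = m` and `0` otherwise (`sum_character`). On the diagonal `n = m` the phase in `θ` cancels, and
what is left is `N` times the sum over `n` of the character `n ↦ exp (2πi (k₂ - k₁) n / N)`, which
vanishes by the same lemma because `k₁ ≢ k₂ (mod N)`.
-/

open scoped BigOperators

/-- The Dirichlet-type sum `D_N(x) = ∑_{n=0}^{N-1} exp (2πi n x)`. -/
noncomputable def dirichletSum (N : ℕ) (x : ℝ) : ℂ :=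
  ∑ n ∈ Finset.range N, Complex.exp (2 * Real.pi * Complex.I * (n : ℂ) * (x : ℂ))

/-- Orthogonality of the additive characters of `ℤ/N`. -/
lemma sum_character (N : ℕ) (hN : 0 < N) (j : ℤ) :
    ∑ k ∈ Finset.range N, Complex.exp (2 * Real.pi * Complex.I * (j : ℂ) * (k : ℂ) / (N : ℂ)) =
      if (N : ℤ) ∣ j then (N : ℂ) else 0 := by
  have hζ := Complex.isPrimitiveRoot_exp N hN.ne'
  set ζ := Complex.exp (2 * Real.pi * Complex.I / N) with hζdef
  have hterm : ∀ k : ℕ,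
      Complex.exp (2 * Real.pi * Complex.I * (j : ℂ) * (k : ℂ) / (N : ℂ)) = (ζ ^ j) ^ k := by
    intro k
    rw [hζdef, ← Complex.exp_int_mul, ← Complex.exp_nat_mul]
    congr 1
    ring
  simp only [hterm]
  split_ifs with h
  · simp [(hζ.zpow_eq_one_iff_dvd j).2 h]
  · have h1 : ζ ^ j - 1 ≠ 0 := sub_ne_zero.2 fun h' => h ((hζ.zpow_eq_one_iff_dvd j).1 h')
    have h2 := geom_sum_mul (ζ ^ j) N
    have h3 : (ζ ^ j) ^ N = 1 := by
      rw [← zpow_natCast, ← zpow_mul, mul_comm, zpow_mul, zpow_natCast, hζ.pow_eq_one, one_zpow]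
    rw [h3, sub_self] at h2
    exact (mul_eq_zero.1 h2).resolve_right h1

/-- Orthogonality of distinct columns of the delay-Doppler single-path matrix
(equation (45) of the paper): for `k₁ ≢ k₂ (mod N)`,
`∑_{k'=0}^{N-1} D_N(θ - (k₁-k')/N) * conj (D_N(θ - (k₂-k')/N)) = 0`. -/
theorem dirichlet_columns_orthogonal (N : ℕ) (hN : 0 < N) (θ : ℝ) (k₁ k₂ : ℤ)
    (hk : ¬ k₁ ≡ k₂ [ZMOD (N : ℤ)]) :
    ∑ k' ∈ Finset.range N,
        dirichletSum N (θ - ((k₁ : ℝ) - (k' : ℝ)) / N) *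
          (starRingEnd ℂ) (dirichletSum N (θ - ((k₂ : ℝ) - (k' : ℝ)) / N)) = 0 := by
  -- The part of the `(n, m)` term that is independent of the summation index `k'` of the outer sum.
  let c : ℕ → ℕ → ℂ := fun n m =>
    Complex.exp (2 * Real.pi * Complex.I * (n * (θ - k₁ / N) - m * (θ - k₂ / N)))
  have hN' : (N : ℂ) ≠ 0 := by exact_mod_cast hN.ne'
  have hterm : ∀ k' n m : ℕ,
      Complex.exp (2 * Real.pi * Complex.I * (n : ℂ) * ((θ - ((k₁ : ℝ) - (k' : ℝ)) / N : ℝ) : ℂ)) *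
        (starRingEnd ℂ) (Complex.exp
          (2 * Real.pi * Complex.I * (m : ℂ) * ((θ - ((k₂ : ℝ) - (k' : ℝ)) / N : ℝ) : ℂ))) =
      c n m * Complex.exp
        (2 * Real.pi * Complex.I * (((n : ℤ) - (m : ℤ) : ℤ) : ℂ) * (k' : ℂ) / (N : ℂ)) := by
    intro k' n m
    simp only [c]
    rw [← Complex.exp_conj, ← Complex.exp_add, ← Complex.exp_add]
    congr 1
    simp only [map_mul, Complex.conj_ofReal, Complex.conj_I, map_natCast, map_ofNat]
    push_cast
    field_simp
    ring
  have hdiag : ∀ n ∈ Finset.range N, ∀ m ∈ Finset.range N,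
      ((N : ℤ) ∣ (n : ℤ) - (m : ℤ) ↔ n = m) := by
    intro n hn m hm
    rw [Finset.mem_range] at hn hm
    constructor
    · intro h
      have h0 := Int.eq_zero_of_abs_lt_dvd h (by rw [abs_lt]; constructor <;> omega)
      omega
    · rintro rfl
      simp
  calc
    _ = ∑ k' ∈ Finset.range N, ∑ n ∈ Finset.range N, ∑ m ∈ Finset.range N,
          c n m * Complex.exp
            (2 * Real.pi * Complex.I * (((n : ℤ) - (m : ℤ) : ℤ) : ℂ) * (k' : ℂ) / (N : ℂ)) := by
        refine Finset.sum_congr rfl fun k' _ => ?_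
        simp only [dirichletSum, map_sum, Finset.sum_mul_sum, hterm]
    _ = ∑ n ∈ Finset.range N, ∑ m ∈ Finset.range N, c n m * if n = m then (N : ℂ) else 0 := by
        rw [Finset.sum_comm]
        refine Finset.sum_congr rfl fun n hn => ?_
        rw [Finset.sum_comm]
        refine Finset.sum_congr rfl fun m hm => ?_
        rw [← Finset.mul_sum, sum_character N hN]
        simp only [hdiag n hn m hm]
    _ = ∑ n ∈ Finset.range N, c n n * N := by
        refine Finset.sum_congr rfl fun n hn => ?_
        simp only [mul_ite, mul_zero, Finset.sum_ite_eq, if_pos hn]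
    _ = (∑ n ∈ Finset.range N, Complex.exp
          (2 * Real.pi * Complex.I * ((k₂ - k₁ : ℤ) : ℂ) * (n : ℂ) / (N : ℂ))) * N := by
        rw [Finset.sum_mul]
        refine Finset.sum_congr rfl fun n _ => ?_
        simp only [c]
        congr 2
        push_cast
        field_simp
        ring
    _ = 0 := by
        rw [sum_character N hN, if_neg (fun h => hk (Int.modEq_iff_dvd.2 h)), zero_mul]
end

section
/- Let M, N be positive integers, ℓ_τ ∈ {0,…,M−1} an integer delay, and ν̃ a real number (normalized Doppler). Define the complex (MN)×(MN) matrix A with rows indexed by pairs (k,ℓ) ∈ {0,…,N−1}×{0,…,M−1} (row index kM+ℓ) and columns by pairs (k',ℓ'), whose entry A[(k,ℓ),(k',ℓ')] equals: 0 if ℓ ≠ (ℓ'+ℓ_τ) mod M; (1/N)·(Σ_{n=0}^{N−1} exp(2πi·n·(ν̃ − (k−k')/N)))·exp(2πi·ℓ'·ν̃/M) if ℓ = (ℓ'+ℓ_τ) mod M and ℓ' ≤ M−1−ℓ_τ; and (1/N)·(Σ_{n=0}^{N−1} exp(2πi·n·(ν̃ − (k−k')/N)))·exp(2πi·(ℓ'·ν̃/M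 − k'/N − ν̃)) if ℓ = (ℓ'+ℓ_τ) mod M and ℓ' ≥ M−ℓ_τ. Then A·A^H = I and A^H·A = I, i.e., A is unitary. -/
/-!
The matrix factors as a block permutation carrying a unitary: the entry at `((k, ℓ), (k', ℓ'))` is
`[ℓ = (ℓ' + lτ) mod M] · C(k, k') · φ(k', ℓ')` with unimodular `φ`, where the Doppler kernel `C` is
`N⁻¹ Fᴴ D F` for the discrete Fourier matrix `F` and a unimodular diagonal matrix `D`. Orthogonality
of the characters (`dftMatrix_mul_conjTranspose`) gives `F Fᴴ = N`, hence `Cᴴ C = 1`; as the shift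
`ℓ' ↦ (ℓ' + lτ) mod M` is injective, `Aᴴ A = 1` follows entrywise. The other identity
is then automatic for square matrices.
-/

open scoped BigOperators Matrix

/-- The effective delay-Doppler domain matrix of a single channel path with integer delay
`lτ` and (possibly fractional) normalized Doppler `ν`, for OTFS with rectangular pulses.
Rows and columns are indexed by pairs `(k, ℓ) ∈ {0,…,N-1} × {0,…,M-1}`. -/
noncomputable def pathMatrix (M N : ℕ) (lτ : ℕ) (ν : ℝ) :
    Matrix (Fin N × Fin M) (Fin N × Fin M) ℂ :=
  fun p p' =>
    if ((p.2 : ℕ) ≠ ((p'.2 : ℕ) + lτ) % M) then 0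
    else if (p'.2 : ℕ) + lτ < M then
      (1 / (N : ℂ)) *
        (∑ n ∈ Finset.range N,
          Complex.exp (2 * Real.pi * Complex.I * (n : ℂ) *
            ((ν : ℂ) - (((p.1 : ℕ) : ℂ) - ((p'.1 : ℕ) : ℂ)) / (N : ℂ)))) *
        Complex.exp (2 * Real.pi * Complex.I * ((p'.2 : ℕ) : ℂ) * (ν : ℂ) / (M : ℂ))
    else
      (1 / (N : ℂ)) *
        (∑ n ∈ Finset.range N,
          Complex.exp (2 * Real.pi * Complex.I * (n : ℂ) *
            ((ν : ℂ) - (((p.1 : ℕ) : ℂ) - ((p'.1 : ℕ) : ℂ)) / (N : ℂ)))) *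
        Complex.exp (2 * Real.pi * Complex.I *
          (((p'.2 : ℕ) : ℂ) * (ν : ℂ) / (M : ℂ) - ((p'.1 : ℕ) : ℂ) / (N : ℂ) - (ν : ℂ)))

/-- The unnormalised discrete Fourier matrix, with entries `exp (2πi n k / N)`. -/
noncomputable def dftMatrix (N : ℕ) : Matrix (Fin N) (Fin N) ℂ :=
  fun n k => Complex.exp (2 * Real.pi * Complex.I * ((n : ℕ) : ℂ) * ((k : ℕ) : ℂ) / (N : ℂ))

/-- The Doppler kernel `C(k, k')`: the factor of the path matrix coupling the Doppler indices. -/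
noncomputable def dopplerKernel (N : ℕ) (ν : ℝ) : Matrix (Fin N) (Fin N) ℂ :=
  fun k k' => (1 / (N : ℂ)) *
    (∑ n ∈ Finset.range N,
      Complex.exp (2 * Real.pi * Complex.I * (n : ℂ) *
        ((ν : ℂ) - (((k : ℕ) : ℂ) - ((k' : ℕ) : ℂ)) / (N : ℂ))))

/-- The phase `φ(k', ℓ')` of a column, whose value depends on whether the delay wraps around. -/
noncomputable def columnPhase (M N lτ : ℕ) (ν : ℝ) (p : Fin N × Fin M) : ℂ :=
  if (p.2 : ℕ) + lτ < M then
    Complex.exp (2 * Real.pi * Complex.I * ((p.2 : ℕ) : ℂ) * (ν : ℂ) / (M : ℂ))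
  else
    Complex.exp (2 * Real.pi * Complex.I *
      (((p.2 : ℕ) : ℂ) * (ν : ℂ) / (M : ℂ) - ((p.1 : ℕ) : ℂ) / (N : ℂ) - (ν : ℂ)))

lemma pathMatrix_apply (M N lτ : ℕ) (ν : ℝ) (p p' : Fin N × Fin M) :
    pathMatrix M N lτ ν p p' =
      if (p.2 : ℕ) = ((p'.2 : ℕ) + lτ) % M then
        dopplerKernel N ν p.1 p'.1 * columnPhase M N lτ ν p' else 0 := by
  unfold pathMatrix dopplerKernel columnPhase
  split_ifs <;> first | rfl | contradiction

lemma star_columnPhase_mul_self (M N lτ : ℕ) (ν : ℝ) (p : Fin N × Fin M) :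
    star (columnPhase M N lτ ν p) * columnPhase M N lτ ν p = 1 := by
  unfold columnPhase
  split_ifs
  all_goals
    rw [Complex.star_def, ← Complex.exp_conj, ← Complex.exp_add, ← Complex.exp_zero]
    congr 1
    simp [Complex.conj_ofNat] <;> ring

lemma dftMatrix_mul_conjTranspose (N : ℕ) (hN : 0 < N) :
    dftMatrix N * (dftMatrix N)ᴴ = (N : ℂ) • (1 : Matrix (Fin N) (Fin N) ℂ) := by
  have hN' : (N : ℂ) ≠ 0 := by exact_mod_cast hN.ne'
  ext n m
  set x : ℂ := Complex.exp (2 * Real.pi * Complex.I * (((n : ℕ) : ℂ) - ((m : ℕ) : ℂ)) / (N : ℂ))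
    with hx
  have hsum : (dftMatrix N * (dftMatrix N)ᴴ) n m = ∑ k ∈ Finset.range N, x ^ k := by
    rw [Matrix.mul_apply, Finset.sum_range]
    refine Finset.sum_congr rfl fun k _ => ?_
    rw [Matrix.conjTranspose_apply, dftMatrix, dftMatrix, Complex.star_def, ← Complex.exp_conj,
      ← Complex.exp_add, hx, ← Complex.exp_nat_mul]
    congr 1
    simp [Complex.conj_ofNat]
    ring
  rw [hsum]
  by_cases hnm : n = m
  · subst hnm
    simp [hx]
  · have hpow : x ^ N = 1 := by
      rw [hx, ← Complex.exp_nat_mul, Complex.exp_eq_one_iff]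
      refine ⟨(n : ℤ) - (m : ℤ), ?_⟩
      push_cast
      field_simp
    have hne : x ≠ 1 := by
      rw [hx, Ne, Complex.exp_eq_one_iff]
      rintro ⟨j, hj⟩
      have hpi : (2 * Real.pi * Complex.I : ℂ) ≠ 0 := Complex.two_pi_I_ne_zero
      have h1 : (((n : ℕ) : ℂ) - ((m : ℕ) : ℂ)) = j * N := by
        rw [div_eq_iff hN'] at hj
        apply mul_left_cancel₀ hpi
        rw [hj]
        ring
      have h2 : ((n : ℕ) : ℤ) - ((m : ℕ) : ℤ) = j * N := by exact_mod_cast h1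
      have hn := n.isLt
      have hm := m.isLt
      -- `|n - m| < N` forces the multiple `j * N` to vanish.
      have h3 : ((n : ℕ) : ℤ) - ((m : ℕ) : ℤ) = 0 :=
        Int.eq_zero_of_abs_lt_dvd ⟨j, by rw [h2, mul_comm]⟩ (by rw [abs_lt]; omega)
      exact hnm (Fin.ext (by omega))
    rw [geom_sum_eq hne, hpow]
    simp [hnm]

lemma dopplerKernel_eq (N : ℕ) (ν : ℝ) :
    dopplerKernel N ν = (1 / (N : ℂ)) • ((dftMatrix N)ᴴ *
      (Matrix.diagonal (fun n : Fin N =>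
        Complex.exp (2 * Real.pi * Complex.I * ((n : ℕ) : ℂ) * (ν : ℂ))) * dftMatrix N)) := by
  ext k k'
  rw [Matrix.smul_apply, Matrix.mul_apply, dopplerKernel, Finset.sum_range, smul_eq_mul]
  congr 1
  refine Finset.sum_congr rfl fun n _ => ?_
  rw [Matrix.diagonal_mul, Matrix.conjTranspose_apply, dftMatrix, dftMatrix, Complex.star_def,
    ← Complex.exp_conj, ← Complex.exp_add, ← Complex.exp_add]
  congr 1
  simp [Complex.conj_ofNat]
  ring

lemma dopplerKernel_conjTranspose_mul (N : ℕ) (hN : 0 < N) (ν : ℝ) :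
    (dopplerKernel N ν)ᴴ * dopplerKernel N ν = 1 := by
  have hN' : (N : ℂ) ≠ 0 := by exact_mod_cast hN.ne'
  have hF := dftMatrix_mul_conjTranspose N hN
  have hF' : (dftMatrix N)ᴴ * dftMatrix N = (N : ℂ) • (1 : Matrix (Fin N) (Fin N) ℂ) := by
    have h : dftMatrix N * ((1 / (N : ℂ)) • (dftMatrix N)ᴴ) = 1 := by
      rw [Matrix.mul_smul, hF, smul_smul, one_div_mul_cancel hN', one_smul]
    have h' := mul_eq_one_comm.mp h
    rw [← h', Matrix.smul_mul, smul_smul, mul_one_div_cancel hN', one_smul]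
  rw [dopplerKernel_eq]
  set D := Matrix.diagonal (fun n : Fin N =>
        Complex.exp (2 * Real.pi * Complex.I * ((n : ℕ) : ℂ) * (ν : ℂ))) with hD
  have hDD : Dᴴ * D = 1 := by
    rw [hD, Matrix.diagonal_conjTranspose, Matrix.diagonal_mul_diagonal, ← Matrix.diagonal_one]
    congr 1
    ext n
    rw [Pi.star_apply, Complex.star_def, ← Complex.exp_conj, ← Complex.exp_add, ← Complex.exp_zero]
    congr 1
    simp [Complex.conj_ofNat]
  set F := dftMatrix N
  have key : (Fᴴ * (D * F))ᴴ * (Fᴴ * (D * F)) = ((N : ℂ) * N) • 1 := by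
    calc (Fᴴ * (D * F))ᴴ * (Fᴴ * (D * F)) = Fᴴ * (Dᴴ * ((F * Fᴴ) * (D * F))) := by
          simp only [Matrix.conjTranspose_mul, Matrix.conjTranspose_conjTranspose, Matrix.mul_assoc]
      _ = (N : ℂ) • (Fᴴ * ((Dᴴ * D) * F)) := by
          rw [hF, Matrix.smul_mul, Matrix.one_mul, Matrix.mul_smul, Matrix.mul_smul,
            Matrix.mul_assoc]
      _ = ((N : ℂ) * N) • 1 := by rw [hDD, Matrix.one_mul, hF', smul_smul]
  rw [Matrix.conjTranspose_smul, Matrix.smul_mul, Matrix.mul_smul, key, smul_smul, smul_smul]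
  have hscal : star (1 / (N : ℂ)) * (1 / (N : ℂ)) * (N * N) = 1 := by
    simp
    field_simp
  rw [hscal, one_smul]

lemma shift_injective (M lτ : ℕ) (a b : Fin M)
    (h : ((a : ℕ) + lτ) % M = ((b : ℕ) + lτ) % M) : a = b := by
  have h' : (a : ℕ) ≡ b [MOD M] := Nat.ModEq.add_right_cancel' lτ h
  exact Fin.ext (Nat.ModEq.eq_of_lt_of_lt h' a.isLt b.isLt)

/-- The single-path delay-Doppler matrix is unitary: `A Aᴴ = I` and `Aᴴ A = I`
(equations (42)–(46) of the paper). -/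
theorem pathMatrix_unitary (M N : ℕ) (hM : 0 < M) (hN : 0 < N) (lτ : ℕ) (hlτ : lτ < M)
    (ν : ℝ) :
    pathMatrix M N lτ ν * (pathMatrix M N lτ ν)ᴴ = 1 ∧
      (pathMatrix M N lτ ν)ᴴ * pathMatrix M N lτ ν = 1 := by
  suffices h : (pathMatrix M N lτ ν)ᴴ * pathMatrix M N lτ ν = 1 from
    ⟨mul_eq_one_comm.mp h, h⟩
  ext p q
  rw [Matrix.mul_apply, Fintype.sum_prod_type]
  simp only [Matrix.conjTranspose_apply, pathMatrix_apply]
  by_cases hpq : p.2 = q.2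
  · -- Only the row index `ℓ = (p.2 + lτ) mod M` contributes to the inner sum.
    have hC := congrFun (congrFun (dopplerKernel_conjTranspose_mul N hN ν) p.1) q.1
    rw [Matrix.mul_apply] at hC
    simp only [Matrix.conjTranspose_apply] at hC
    have hinner : ∀ k : Fin N, (∑ l : Fin M,
        star (if (l : ℕ) = ((p.2 : ℕ) + lτ) % M then
          dopplerKernel N ν k p.1 * columnPhase M N lτ ν p else 0) *
        (if (l : ℕ) = ((q.2 : ℕ) + lτ) % M then
          dopplerKernel N ν k q.1 * columnPhase M N lτ ν q else 0)) =
        (star (dopplerKernel N ν k p.1) * dopplerKernel N ν k q.1) *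
          (star (columnPhase M N lτ ν p) * columnPhase M N lτ ν q) := by
      intro k
      rw [Finset.sum_eq_single (⟨((p.2 : ℕ) + lτ) % M, Nat.mod_lt _ hM⟩ : Fin M)]
      · simp only [← hpq, if_true, star_mul']
        ring
      · intro l _ hl
        rw [if_neg (fun h => hl (Fin.ext h))]
        simp
      · simp
    simp only [hinner]
    rw [← Finset.sum_mul, hC]
    by_cases h1 : p.1 = q.1
    · have : p = q := Prod.ext h1 hpq
      subst this
      simpa using star_columnPhase_mul_self M N lτ ν p
    · have : p ≠ q := fun h => h1 (congrArg Prod.fst h)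
      simp [Matrix.one_apply_ne, h1, this]
  · have hne : p ≠ q := fun h => hpq (congrArg Prod.snd h)
    rw [Matrix.one_apply_ne hne]
    refine Finset.sum_eq_zero fun k _ => Finset.sum_eq_zero fun l _ => ?_
    by_cases h1 : (l : ℕ) = ((p.2 : ℕ) + lτ) % M
    · rw [if_neg (fun h2 => hpq (shift_injective M lτ _ _ (h1.symm.trans h2))), mul_zero]
    · rw [if_neg h1, star_zero, zero_mul]
end

section
/- Fix two distinct users s ≠ s' in the multi-user setup and assume the cross-user angle-separation condition: for all i ∈ {1,…,L_s} and k ∈ {1,…,L_{s'}}, either α·b ∉ ℤ or α·c ∉ ℤ, where b, c are the angle-difference parameters of paths (s,i) and (s',k). Then the normalized matrix (1/Q)·G_{s,s'} = (1/Q)·Σ_{q=1}^{Q} H_{q,s}·H_{q,s'}^H converges entrywise to the zero matrix as Q_h → ∞ and Q_v → ∞ jointly (along the product filter atTop ×ˢ atTop). -/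
/-!
Expanding both channel matrices, the `(r, p)` entry of `G_{s,s'}` is a finite linear combination,
with coefficients independent of `(Q_h, Q_v)`, of sums over the antennas of
`e_q(θ, φ) * conj (e_q(θ', φ'))`. Such a summand equals `z ^ j * w ^ k`, where
`z = exp (2πi α b)`, `w = exp (2πi α c)` and `(j, k)` are the horizontal and vertical positions of
the antenna, so the sum over the `Q_h × Q_v` array factors into two geometric sums
(`sum_array`). After division by `Q_h Q_v` each factor is an average of powers of a number of
modulus one: it is bounded by `1`, and it tends to `0` unless that number is `1`. The separation
condition says precisely that `z ≠ 1` or `w ≠ 1`.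
-/

open scoped BigOperators Matrix

/-- Angle-separation condition for two angle pairs: `α·b ∉ ℤ` or `α·c ∉ ℤ`, where
`b, c` are the corresponding angle-difference parameters. -/
def angleSep (α θ₁ φ₁ θ₂ φ₂ : ℝ) : Prop :=
  (∀ m : ℤ, α * (Real.sin φ₁ * Real.sin θ₁ - Real.sin φ₂ * Real.sin θ₂) ≠ m) ∨
  (∀ m : ℤ, α * (Real.cos θ₁ - Real.cos θ₂) ≠ m)

/-- The effective delay-Doppler channel matrix `H_{q,s}` between antenna `q` and user `s`. -/
noncomputable def Hmat {n K : ℕ} (L : Fin K → ℕ)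
    (g : (s : Fin K) → Fin (L s) → ℂ) (θ φ : (s : Fin K) → Fin (L s) → ℝ)
    (A : (s : Fin K) → Fin (L s) → Matrix (Fin n) (Fin n) ℂ)
    (α : ℝ) (Qh : ℕ) (q : ℕ) (s : Fin K) : Matrix (Fin n) (Fin n) ℂ :=
  ∑ i, (g s i * steerCoef Qh α (θ s i) (φ s i) q) • A s i

/-- The combined matrix `G_{s,s'} = ∑_{q=1}^{Q_h Q_v} H_{q,s} H_{q,s'}ᴴ`. -/
noncomputable def Gmat {n K : ℕ} (L : Fin K → ℕ)
    (g : (s : Fin K) → Fin (L s) → ℂ) (θ φ : (s : Fin K) → Fin (L s) → ℝ)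
    (A : (s : Fin K) → Fin (L s) → Matrix (Fin n) (Fin n) ℂ)
    (α : ℝ) (Qh Qv : ℕ) (s s' : Fin K) : Matrix (Fin n) (Fin n) ℂ :=
  ∑ q ∈ Finset.Icc 1 (Qh * Qv), Hmat L g θ φ A α Qh q s * (Hmat L g θ φ A α Qh q s')ᴴ

/-- The average `(1/N) ∑_{j<N} z^j` of the first `N` powers of `z` (equal to `0` for `N = 0`). -/
noncomputable def powAvg (z : ℂ) (N : ℕ) : ℂ := (N : ℂ)⁻¹ * ∑ j ∈ Finset.range N, z ^ j

lemma norm_powAvg_le (z : ℂ) (hz : ‖z‖ = 1) (N : ℕ) : ‖powAvg z N‖ ≤ 1 := by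
  have h : ‖∑ j ∈ Finset.range N, z ^ j‖ ≤ N := by
    refine (norm_sum_le _ _).trans ?_
    simp [norm_pow, hz]
  rw [powAvg, norm_mul, norm_inv, Complex.norm_natCast]
  calc (N : ℝ)⁻¹ * ‖∑ j ∈ Finset.range N, z ^ j‖ ≤ (N : ℝ)⁻¹ * N := by gcongr
    _ ≤ 1 := inv_mul_le_one

lemma tendsto_powAvg (z : ℂ) (hz : ‖z‖ = 1) (h1 : z ≠ 1) :
    Filter.Tendsto (powAvg z) Filter.atTop (nhds 0) := by
  have hinv : Filter.Tendsto (fun N : ℕ => (N : ℂ)⁻¹) Filter.atTop (nhds 0) :=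
    tendsto_inv_atTop_nhds_zero_nat (𝕜 := ℂ)
  refine hinv.zero_mul_isBoundedUnder_le ?_
  -- The partial geometric sums `(z ^ N - 1) / (z - 1)` are bounded by `2 / ‖z - 1‖`.
  refine Filter.isBoundedUnder_of ⟨2 / ‖z - 1‖, fun N => ?_⟩
  simp only [Function.comp_apply]
  rw [geom_sum_eq h1, norm_div]
  gcongr
  refine (norm_sub_le _ _).trans ?_
  simp only [norm_pow, hz, one_pow, norm_one]
  norm_num

/-- Numbering the antennas row by row identifies `{1,…,Q_h Q_v}` with a `Q_h × Q_v` array. -/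
lemma sum_array (Qh Qv : ℕ) (z w : ℂ) :
    ∑ q ∈ Finset.Icc 1 (Qh * Qv), z ^ ((q - 1) % Qh) * w ^ ((q - 1) / Qh) =
      (∑ j ∈ Finset.range Qh, z ^ j) * ∑ k ∈ Finset.range Qv, w ^ k := by
  have hshift : ∑ q ∈ Finset.Icc 1 (Qh * Qv), z ^ ((q - 1) % Qh) * w ^ ((q - 1) / Qh) =
      ∑ q ∈ Finset.range (Qh * Qv), z ^ (q % Qh) * w ^ (q / Qh) := by
    rw [← Finset.Ico_add_one_right_eq_Icc, Finset.sum_Ico_eq_sum_range]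
    simp
  rw [hshift]
  clear hshift
  induction Qv with
  | zero => simp
  | succ v ih =>
    rw [Nat.mul_succ, Finset.sum_range_add, ih, Finset.sum_range_succ, mul_add,
      Finset.sum_mul _ _ (w ^ v)]
    congr 1
    refine Finset.sum_congr rfl fun j hj => ?_
    have hj : j < Qh := Finset.mem_range.mp hj
    rw [Nat.mul_add_mod, Nat.mod_eq_of_lt hj, Nat.mul_add_div (by omega), Nat.div_eq_of_lt hj,
      add_zero]

/-- The unit complex number `exp (2πi x)` of phase `x`, measured in full turns. -/
noncomputable def phase (x : ℝ) : ℂ := Complex.exp (2 * Real.pi * Complex.I * (x : ℂ))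

lemma norm_phase (x : ℝ) : ‖phase x‖ = 1 := by
  have : 2 * Real.pi * Complex.I * (x : ℂ) = ((2 * Real.pi * x : ℝ) : ℂ) * Complex.I := by
    push_cast; ring
  rw [phase, this, Complex.norm_exp_ofReal_mul_I]

lemma phase_ne_one (x : ℝ) (hx : ∀ m : ℤ, x ≠ m) : phase x ≠ 1 := by
  intro h
  obtain ⟨m, hm⟩ := Complex.exp_eq_one_iff.mp h
  refine hx m ?_
  have h2 : (2 * Real.pi * Complex.I : ℂ) ≠ 0 := Complex.two_pi_I_ne_zero
  have : (x : ℂ) = m := mul_left_cancel₀ h2 (by rw [hm]; ring)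
  exact_mod_cast this

lemma steerCoef_mul_star (Qh : ℕ) (α θ φ θ' φ' : ℝ) (q : ℕ) :
    steerCoef Qh α θ φ q * star (steerCoef Qh α θ' φ' q) =
      phase (α * (Real.sin φ * Real.sin θ - Real.sin φ' * Real.sin θ')) ^ ((q - 1) % Qh) *
        phase (α * (Real.cos θ - Real.cos θ')) ^ ((q - 1) / Qh) := by
  simp only [steerCoef, phase, Complex.star_def, ← Complex.exp_conj, ← Complex.exp_nat_mul,
    ← Complex.exp_add]
  congr 1
  simp only [map_mul, map_add, Complex.conj_ofReal, Complex.conj_I, map_natCast, map_ofNat]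
  push_cast
  ring

/-- Entrywise, `(1/Q) G_{s,s'}` is a fixed linear combination of products of power averages. -/
lemma Gmat_entry {n K : ℕ} (L : Fin K → ℕ)
    (g : (s : Fin K) → Fin (L s) → ℂ) (θ φ : (s : Fin K) → Fin (L s) → ℝ)
    (A : (s : Fin K) → Fin (L s) → Matrix (Fin n) (Fin n) ℂ)
    (α : ℝ) (Qh Qv : ℕ) (s s' : Fin K) (r p : Fin n) :
    (1 / ((Qh * Qv : ℕ) : ℂ)) * Gmat L g θ φ A α Qh Qv s s' r p =
      ∑ i, ∑ k, (g s i * star (g s' k) * (A s i * (A s' k)ᴴ) r p) *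
        (powAvg (phase (α * (Real.sin (φ s i) * Real.sin (θ s i) -
            Real.sin (φ s' k) * Real.sin (θ s' k)))) Qh *
          powAvg (phase (α * (Real.cos (θ s i) - Real.cos (θ s' k)))) Qv) := by
  have hprod : ∀ q, (Hmat L g θ φ A α Qh q s * (Hmat L g θ φ A α Qh q s')ᴴ) r p =
      ∑ i, ∑ k, (g s i * star (g s' k) * (A s i * (A s' k)ᴴ) r p) *
        (steerCoef Qh α (θ s i) (φ s i) q * star (steerCoef Qh α (θ s' k) (φ s' k) q)) := by
    intro q
    simp only [Hmat, Matrix.conjTranspose_sum, Matrix.conjTranspose_smul, Finset.sum_mul,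
      Finset.mul_sum, Matrix.sum_apply, Matrix.smul_mul, Matrix.mul_smul, Matrix.smul_apply,
      smul_eq_mul, star_mul']
    rw [Finset.sum_comm]
    refine Finset.sum_congr rfl fun i _ => Finset.sum_congr rfl fun k _ => ?_
    ring
  rw [Gmat, Matrix.sum_apply]
  simp only [hprod]
  rw [Finset.sum_comm, Finset.mul_sum]
  refine Finset.sum_congr rfl fun i _ => ?_
  rw [Finset.sum_comm, Finset.mul_sum]
  refine Finset.sum_congr rfl fun k _ => ?_
  simp only [steerCoef_mul_star]
  rw [← Finset.mul_sum, sum_array, powAvg, powAvg, Nat.cast_mul, one_div, mul_inv]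
  ring

lemma tendsto_powAvg_mul (z w : ℂ) (hz : ‖z‖ = 1) (hw : ‖w‖ = 1) (h : z ≠ 1 ∨ w ≠ 1) :
    Filter.Tendsto (fun P : ℕ × ℕ => powAvg z P.1 * powAvg w P.2)
      (Filter.atTop ×ˢ Filter.atTop) (nhds 0) := by
  rcases h with h | h
  · exact ((tendsto_powAvg z hz h).comp Filter.tendsto_fst).zero_mul_isBoundedUnder_le
      (Filter.isBoundedUnder_of ⟨1, fun P => norm_powAvg_le w hw P.2⟩)
  · exact Filter.isBoundedUnder_le_mul_tendsto_zero
      (Filter.isBoundedUnder_of ⟨1, fun P => norm_powAvg_le z hz P.1⟩)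
      ((tendsto_powAvg w hw h).comp Filter.tendsto_snd)

/-- Vanishing multi-user interference (equation (63)): under the cross-user
angle-separation condition, `(1/Q) G_{s,s'}` converges entrywise to the zero matrix
as `Q_h, Q_v → ∞` jointly, for distinct users `s ≠ s'`. -/
theorem Gss'_div_Q_tendsto_zero
    (n K : ℕ) (hn : 0 < n) (hK : 0 < K) (α : ℝ) (hα : 0 < α)
    (L : Fin K → ℕ) (hL : ∀ s, 0 < L s)
    (g : (s : Fin K) → Fin (L s) → ℂ)
    (θ φ : (s : Fin K) → Fin (L s) → ℝ)
    (A : (s : Fin K) → Fin (L s) → Matrix (Fin n) (Fin n) ℂ)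
    (hA₁ : ∀ s i, A s i * (A s i)ᴴ = 1) (hA₂ : ∀ s i, (A s i)ᴴ * A s i = 1)
    (s s' : Fin K) (hss' : s ≠ s')
    (hsep : ∀ (i : Fin (L s)) (k : Fin (L s')),
      angleSep α (θ s i) (φ s i) (θ s' k) (φ s' k))
    (r p : Fin n) :
    Filter.Tendsto
      (fun P : ℕ × ℕ =>
        (1 / ((P.1 * P.2 : ℕ) : ℂ)) * Gmat L g θ φ A α P.1 P.2 s s' r p)
      (Filter.atTop ×ˢ Filter.atTop)
      (nhds ((0 : Matrix (Fin n) (Fin n) ℂ) r p)) := by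
  simp only [Gmat_entry, Matrix.zero_apply]
  rw [show (0 : ℂ) = ∑ _i : Fin (L s), ∑ _k : Fin (L s'), (0 : ℂ) by simp]
  refine tendsto_finsetSum _ fun i _ => tendsto_finsetSum _ fun k _ => ?_
  have hik := tendsto_powAvg_mul _ _ (norm_phase _) (norm_phase _)
    ((hsep i k).imp (phase_ne_one _) (phase_ne_one _))
  simpa only [mul_zero] using hik.const_mul (g s i * star (g s' k) * (A s i * (A s' k)ᴴ) r p)
end
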